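/- arXiv:1905.03234 — 2 statements merged into one kernel-verified Lean document; each statement's English description precedes it below -/
import Mathlib

section
/- Let A, B, V ∈ ℝ² be affinely independent, K = convexHull{A, B, V}, β the affine function with β(V) = 1, β(A) = β(B) = 0, and s(x) = e(β(x)) with e(t) = (56t³ − 63t² + 18t − 1)/10. If v : ℝ² → ℝ² has both components polynomials of total degree at most 4 and v vanishes identically on the two segments [V, A] and [V, B], then ∫_K s(x) · div v(x) dx = 0. -/
open MeasureTheory

/-- The pointwise divergence of a planar vector field, evaluated via Fréchet
derivatives of the two components. -/
noncomputable def pdiv (v : ℝ × ℝ → ℝ × ℝ) (x : ℝ × ℝ) : ℝ :=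
  fderiv ℝ (fun y => (v y).1) x (1, 0) + fderiv ℝ (fun y => (v y).2) x (0, 1)

/-- Integral of an explicit polynomial of degree at most seven. -/
lemma int_poly8 (x c0 c1 c2 c3 c4 c5 c6 c7 : ℝ) :
    ∫ b in (0:ℝ)..x, (c0 + c1 * b + c2 * b ^ 2 + c3 * b ^ 3 + c4 * b ^ 4 + c5 * b ^ 5 +
      c6 * b ^ 6 + c7 * b ^ 7) =
    c0 * x + c1 * x ^ 2 / 2 + c2 * x ^ 3 / 3 + c3 * x ^ 4 / 4 + c4 * x ^ 5 / 5 +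
      c5 * x ^ 6 / 6 + c6 * x ^ 7 / 7 + c7 * x ^ 8 / 8 := by
  have h : ∀ b ∈ Set.uIcc 0 x, HasDerivAt (fun x : ℝ =>
      c0 * x + c1 / 2 * x ^ 2 + c2 / 3 * x ^ 3 + c3 / 4 * x ^ 4 + c4 / 5 * x ^ 5 +
      c5 / 6 * x ^ 6 + c6 / 7 * x ^ 7 + c7 / 8 * x ^ 8)
      (c0 + c1 * b + c2 * b ^ 2 + c3 * b ^ 3 + c4 * b ^ 4 + c5 * b ^ 5 +
      c6 * b ^ 6 + c7 * b ^ 7) b := by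
    intro b _
    have := ((((((((hasDerivAt_id b).const_mul c0).add
      ((hasDerivAt_pow 2 b).const_mul (c1 / 2))).add
      ((hasDerivAt_pow 3 b).const_mul (c2 / 3))).add
      ((hasDerivAt_pow 4 b).const_mul (c3 / 4))).add
      ((hasDerivAt_pow 5 b).const_mul (c4 / 5))).add
      ((hasDerivAt_pow 6 b).const_mul (c5 / 6))).add
      ((hasDerivAt_pow 7 b).const_mul (c6 / 7))).add
      ((hasDerivAt_pow 8 b).const_mul (c7 / 8))
    refine this.congr_deriv ?_
    push_cast
    ring
  rw [intervalIntegral.integral_eq_sub_of_hasDerivAt h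
    (Continuous.intervalIntegrable (by fun_prop) _ _)]
  ring

/-- The reference triangle. -/
def refT : Set (ℝ × ℝ) := {y | 0 ≤ y.1 ∧ 0 ≤ y.2 ∧ y.1 + y.2 ≤ 1}

lemma refT_closed : IsClosed refT :=
  (isClosed_le continuous_const continuous_fst).inter
    ((isClosed_le continuous_const continuous_snd).inter
      (isClosed_le (continuous_fst.add continuous_snd) continuous_const))

lemma refT_compact : IsCompact refT := by
  refine ((isCompact_Icc (a := (0:ℝ)) (b := 1)).prod
    (isCompact_Icc (a := (0:ℝ)) (b := 1))).of_isClosed_subset refT_closed ?_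
  rintro ⟨a, b⟩ ⟨h1, h2, h3⟩
  simp only at h1 h2 h3
  exact ⟨⟨h1, by simp only; linarith⟩, ⟨h2, by simp only; linarith⟩⟩

lemma int_refT (h : ℝ × ℝ → ℝ) (hc : Continuous h) :
    ∫ y in refT, h y = ∫ a in (0:ℝ)..1, ∫ b in (0:ℝ)..(1 - a), h (a, b) := by
  have hi : Integrable (refT.indicator h) :=
    (integrable_indicator_iff refT_closed.measurableSet).2
      (hc.continuousOn.integrableOn_compact refT_compact)
  rw [← integral_indicator refT_closed.measurableSet, Measure.volume_eq_prod,
    integral_prod _ (by rw [← Measure.volume_eq_prod]; exact hi),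
    intervalIntegral.integral_of_le zero_le_one, ← integral_Icc_eq_integral_Ioc,
    ← integral_indicator measurableSet_Icc]
  congr 1
  ext a
  by_cases ha : a ∈ Set.Icc (0:ℝ) 1
  · rw [Set.indicator_of_mem ha, intervalIntegral.integral_of_le (by linarith [ha.2]),
      ← integral_Icc_eq_integral_Ioc, ← integral_indicator measurableSet_Icc]
    congr 1
    ext b
    have : ((a, b) ∈ refT) ↔ b ∈ Set.Icc 0 (1 - a) := by
      simp only [refT, Set.mem_setOf_eq, Set.mem_Icc]
      constructor
      · rintro ⟨_, h2, h3⟩; exact ⟨h2, by linarith⟩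
      · rintro ⟨h2, h3⟩; exact ⟨ha.1, h2, by linarith⟩
    by_cases hb : b ∈ Set.Icc 0 (1 - a)
    · rw [Set.indicator_of_mem hb, Set.indicator_of_mem (this.2 hb)]
    · rw [Set.indicator_of_notMem hb, Set.indicator_of_notMem (fun h => hb (this.1 h))]
  · rw [Set.indicator_of_notMem ha]
    have : ∀ b, refT.indicator h (a, b) = 0 := by
      intro b
      refine Set.indicator_of_notMem ?_ _
      rintro ⟨h1, h2, h3⟩
      simp only at h1 h2 h3
      exact ha ⟨h1, by linarith⟩
    simp [this]

lemma int_key (k1 k2 k3 k4 k5 k6 k7 k8 k9 : ℝ) :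
    ∫ y in refT, (56 * (1 - y.1 - y.2) ^ 3 - 63 * (1 - y.1 - y.2) ^ 2 +
      18 * (1 - y.1 - y.2) - 1) / 10 *
      (k1 * y.1 + k2 * y.2 + k3 * y.1 ^ 2 + k4 * (y.1 * y.2) + k5 * y.2 ^ 2 +
       k6 * y.1 ^ 3 + k7 * (y.1 ^ 2 * y.2) + k8 * (y.1 * y.2 ^ 2) + k9 * y.2 ^ 3) = 0 := by
  rw [int_refT _ (by fun_prop)]
  refine Eq.trans ?_ ((int_poly8 1
      ((1/200)*k2) ((1/10)*k1 + (-1/10)*k2 + (1/200)*k4 + (-1/100)*k5) ((-1/1)*k1 + (1/2)*k2 +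
      (1/10)*k3 + (-1/10)*k4 + (1/10)*k5 + (1/200)*k7 + (-1/100)*k8 + (3/200)*k9) ((3/1)*k1 +
      (-1/1)*k2 + (-1/1)*k3 + (1/2)*k4 + (-1/3)*k5 + (1/10)*k6 + (-1/10)*k7 + (1/10)*k8 +
      (-1/10)*k9) ((-7/2)*k1 + (7/8)*k2 + (3/1)*k3 + (-1/1)*k4 + (1/2)*k5 + (-1/1)*k6 +
      (1/2)*k7 + (-1/3)*k8 + (1/4)*k9) ((7/5)*k1 + (-7/25)*k2 + (-7/2)*k3 + (7/8)*k4 +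
      (-7/20)*k5 + (3/1)*k6 + (-1/1)*k7 + (1/2)*k8 + (-3/10)*k9) ((7/5)*k3 + (-7/25)*k4 +
      (7/75)*k5 + (-7/2)*k6 + (7/8)*k7 + (-7/20)*k8 + (7/40)*k9) ((7/5)*k6 + (-7/25)*k7 +
      (7/75)*k8 + (-1/25)*k9)).trans ?_)
  · congr 1
    ext a
    refine Eq.trans ?_ ((int_poly8 (1 - a)
      ((1/1)*k1*a^1 + (-6/1)*k1*a^2 + (21/2)*k1*a^3 + (-28/5)*k1*a^4 + (1/1)*k3*a^2 +
      (-6/1)*k3*a^3 + (21/2)*k3*a^4 + (-28/5)*k3*a^5 + (1/1)*k6*a^3 + (-6/1)*k6*a^4 +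
      (21/2)*k6*a^5 + (-28/5)*k6*a^6) ((-6/1)*k1*a^1 + (21/1)*k1*a^2 + (-84/5)*k1*a^3 +
      (1/1)*k2*a^0 + (-6/1)*k2*a^1 + (21/2)*k2*a^2 + (-28/5)*k2*a^3 + (-6/1)*k3*a^2 +
      (21/1)*k3*a^3 + (-84/5)*k3*a^4 + (1/1)*k4*a^1 + (-6/1)*k4*a^2 + (21/2)*k4*a^3 +
      (-28/5)*k4*a^4 + (-6/1)*k6*a^3 + (21/1)*k6*a^4 + (-84/5)*k6*a^5 + (1/1)*k7*a^2 +
      (-6/1)*k7*a^3 + (21/2)*k7*a^4 + (-28/5)*k7*a^5) ((21/2)*k1*a^1 + (-84/5)*k1*a^2 +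
      (-6/1)*k2*a^0 + (21/1)*k2*a^1 + (-84/5)*k2*a^2 + (21/2)*k3*a^2 + (-84/5)*k3*a^3 +
      (-6/1)*k4*a^1 + (21/1)*k4*a^2 + (-84/5)*k4*a^3 + (1/1)*k5*a^0 + (-6/1)*k5*a^1 +
      (21/2)*k5*a^2 + (-28/5)*k5*a^3 + (21/2)*k6*a^3 + (-84/5)*k6*a^4 + (-6/1)*k7*a^2 +
      (21/1)*k7*a^3 + (-84/5)*k7*a^4 + (1/1)*k8*a^1 + (-6/1)*k8*a^2 + (21/2)*k8*a^3 +
      (-28/5)*k8*a^4) ((-28/5)*k1*a^1 + (21/2)*k2*a^0 + (-84/5)*k2*a^1 + (-28/5)*k3*a^2 +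
      (21/2)*k4*a^1 + (-84/5)*k4*a^2 + (-6/1)*k5*a^0 + (21/1)*k5*a^1 + (-84/5)*k5*a^2 +
      (-28/5)*k6*a^3 + (21/2)*k7*a^2 + (-84/5)*k7*a^3 + (-6/1)*k8*a^1 + (21/1)*k8*a^2 +
      (-84/5)*k8*a^3 + (1/1)*k9*a^0 + (-6/1)*k9*a^1 + (21/2)*k9*a^2 + (-28/5)*k9*a^3)
      ((-28/5)*k2*a^0 + (-28/5)*k4*a^1 + (21/2)*k5*a^0 + (-84/5)*k5*a^1 + (-28/5)*k7*a^2 +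
      (21/2)*k8*a^1 + (-84/5)*k8*a^2 + (-6/1)*k9*a^0 + (21/1)*k9*a^1 + (-84/5)*k9*a^2)
      ((-28/5)*k5*a^0 + (-28/5)*k8*a^1 + (21/2)*k9*a^0 + (-84/5)*k9*a^1) ((-28/5)*k9*a^0) (0)).trans ?_)
    · congr 1
      ext b
      ring
    · ring
  · ring

/-- A polynomial of total degree at most four in two variables, written out. -/
lemma eval_deg4 (q : MvPolynomial (Fin 2) ℝ) (hq : q.totalDegree ≤ 4) :
    ∃ c : ℕ → ℕ → ℝ, ∀ a b : ℝ, MvPolynomial.eval ![a, b] q =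
      c 0 0 + c 1 0 * a + c 2 0 * a ^ 2 + c 3 0 * a ^ 3 + c 4 0 * a ^ 4 +
      c 0 1 * b + c 0 2 * b ^ 2 + c 0 3 * b ^ 3 + c 0 4 * b ^ 4 +
      c 1 1 * (a * b) + c 2 1 * (a ^ 2 * b) + c 1 2 * (a * b ^ 2) +
      c 3 1 * (a ^ 3 * b) + c 2 2 * (a ^ 2 * b ^ 2) + c 1 3 * (a * b ^ 3) := by
  classical
  let f : ℕ × ℕ → (Fin 2 →₀ ℕ) := fun p => Finsupp.single 0 p.1 + Finsupp.single 1 p.2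
  have f0 : ∀ p, f p 0 = p.1 := by intro p; simp [f]
  have f1 : ∀ p, f p 1 = p.2 := by intro p; simp [f]
  have finj : Function.Injective f := by
    intro p r h
    exact Prod.ext (by rw [← f0 p, h, f0]) (by rw [← f1 p, h, f1])
  refine ⟨fun i j => q.coeff (f (i, j)), fun a b => ?_⟩
  let F : Finset (ℕ × ℕ) := (Finset.range 5 ×ˢ Finset.range 5).filter (fun p => p.1 + p.2 ≤ 4)
  have hsub : q.support ⊆ F.image f := by
    intro d hd
    have h := (MvPolynomial.le_totalDegree hd).trans hq
    rw [Finsupp.sum_fintype _ _ (by simp), Fin.sum_univ_two] at h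
    refine Finset.mem_image.2 ⟨(d 0, d 1), ?_, ?_⟩
    · simp only [F, Finset.mem_filter, Finset.mem_product, Finset.mem_range]
      omega
    · ext i
      fin_cases i
      · exact f0 _
      · exact f1 _
  rw [MvPolynomial.eval_eq', Finset.sum_subset hsub, Finset.sum_image finj.injOn]
  · simp only [Fin.prod_univ_two, f0, f1]
    simp only [F, Finset.sum_filter, Finset.sum_product, Finset.sum_range_succ,
      Finset.sum_range_zero]
    norm_num
    ring
  · intro d _ hd
    rw [MvPolynomial.notMem_support_iff.1 hd, zero_mul]

lemma subst_deg (p : MvPolynomial (Fin 2) ℝ) (hp : p.totalDegree ≤ 4)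
    (l : Fin 2 → MvPolynomial (Fin 2) ℝ) (hl : ∀ i, (l i).totalDegree ≤ 1) :
    (MvPolynomial.bind₁ l p).totalDegree ≤ 4 := by
  rw [show MvPolynomial.bind₁ l p = MvPolynomial.eval₂ MvPolynomial.C l p from rfl,
    MvPolynomial.eval₂_eq']
  refine (MvPolynomial.totalDegree_finsetSum _ _).trans (Finset.sup_le fun d hd => ?_)
  have h := (MvPolynomial.le_totalDegree hd).trans hp
  rw [Finsupp.sum_fintype _ _ (by simp), Fin.sum_univ_two] at h
  refine (MvPolynomial.totalDegree_mul _ _).trans ?_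
  rw [MvPolynomial.totalDegree_C, zero_add, Fin.prod_univ_two]
  refine (MvPolynomial.totalDegree_mul _ _).trans ?_
  have h0 := (MvPolynomial.totalDegree_pow (l 0) (d 0)).trans (Nat.mul_le_mul_left _ (hl 0))
  have h1 := (MvPolynomial.totalDegree_pow (l 1) (d 1)).trans (Nat.mul_le_mul_left _ (hl 1))
  omega

lemma lin_deg (u v w : ℝ) : (MvPolynomial.C u * MvPolynomial.X 0 +
    MvPolynomial.C v * MvPolynomial.X 1 + MvPolynomial.C w :
      MvPolynomial (Fin 2) ℝ).totalDegree ≤ 1 := by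
  have hX : ∀ (u : ℝ) (i : Fin 2), (MvPolynomial.C u * MvPolynomial.X i :
      MvPolynomial (Fin 2) ℝ).totalDegree ≤ 1 := fun u i =>
    (MvPolynomial.totalDegree_mul _ _).trans (by simp)
  refine (MvPolynomial.totalDegree_add _ _).trans (max_le ?_ (by simp))
  exact (MvPolynomial.totalDegree_add _ _).trans (max_le (hX _ _) (hX _ _))

/-- The pulled-back component on the reference triangle. -/
lemma pullback_form (p : MvPolynomial (Fin 2) ℝ) (hp : p.totalDegree ≤ 4) (P Q V : ℝ × ℝ)
    (h1 : ∀ t ∈ Set.Icc (0:ℝ) 1,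
      MvPolynomial.eval ![(t • P + V).1, (t • P + V).2] p = 0)
    (h2 : ∀ t ∈ Set.Icc (0:ℝ) 1,
      MvPolynomial.eval ![(t • Q + V).1, (t • Q + V).2] p = 0) :
    ∃ c1 c2 c3 c4 c5 c6 : ℝ, ∀ a b : ℝ,
      MvPolynomial.eval ![(a • P + b • Q + V).1, (a • P + b • Q + V).2] p =
      c1 * (a * b) + c2 * (a ^ 2 * b) + c3 * (a * b ^ 2) +
      c4 * (a ^ 3 * b) + c5 * (a ^ 2 * b ^ 2) + c6 * (a * b ^ 3) := by
  let l : Fin 2 → MvPolynomial (Fin 2) ℝ :=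
    ![MvPolynomial.C P.1 * MvPolynomial.X 0 + MvPolynomial.C Q.1 * MvPolynomial.X 1 +
        MvPolynomial.C V.1,
      MvPolynomial.C P.2 * MvPolynomial.X 0 + MvPolynomial.C Q.2 * MvPolynomial.X 1 +
        MvPolynomial.C V.2]
  have hl : ∀ i, (l i).totalDegree ≤ 1 := by
    intro i
    fin_cases i
    · exact lin_deg _ _ _
    · exact lin_deg _ _ _
  obtain ⟨c, hc⟩ := eval_deg4 _ (subst_deg p hp l hl)
  have he : ∀ a b : ℝ, MvPolynomial.eval ![a, b] (MvPolynomial.bind₁ l p) =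
      MvPolynomial.eval ![(a • P + b • Q + V).1, (a • P + b • Q + V).2] p := by
    intro a b
    have : MvPolynomial.eval ![a, b] (MvPolynomial.bind₁ l p) =
        MvPolynomial.eval (fun i => MvPolynomial.eval ![a, b] (l i)) p :=
      MvPolynomial.eval₂Hom_bind₁ (RingHom.id ℝ) _ _ _
    rw [this]
    congr 2
    ext i
    fin_cases i
    · simp [l]; ring
    · simp [l]; ring
  have e1 : ∀ t ∈ Set.Icc (0:ℝ) 1, MvPolynomial.eval ![t, 0] (MvPolynomial.bind₁ l p) = 0 := by
    intro t ht
    rw [he]; simpa using h1 t ht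
  have e2 : ∀ t ∈ Set.Icc (0:ℝ) 1, MvPolynomial.eval ![0, t] (MvPolynomial.bind₁ l p) = 0 := by
    intro t ht
    rw [he]; simpa using h2 t ht
  simp only [hc] at e1 e2
  have a0 := e1 0 (by norm_num)
  have a1 := e1 (1/4) (by norm_num)
  have a2 := e1 (1/2) (by norm_num)
  have a3 := e1 (3/4) (by norm_num)
  have a4 := e1 1 (by norm_num)
  have b1 := e2 (1/4) (by norm_num)
  have b2 := e2 (1/2) (by norm_num)
  have b3 := e2 (3/4) (by norm_num)
  have b4 := e2 1 (by norm_num)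
  norm_num at a0 a1 a2 a3 a4 b1 b2 b3 b4
  refine ⟨c 1 1, c 2 1, c 1 2, c 3 1, c 2 2, c 1 3, fun a b => ?_⟩
  rw [← he, hc]
  have z0 : c 0 0 = 0 := by linarith
  have z1 : c 1 0 = 0 := by linarith
  have z2 : c 2 0 = 0 := by linarith
  have z3 : c 3 0 = 0 := by linarith
  have z4 : c 4 0 = 0 := by linarith
  have y1 : c 0 1 = 0 := by linarith
  have y2 : c 0 2 = 0 := by linarith
  have y3 : c 0 3 = 0 := by linarith
  have y4 : c 0 4 = 0 := by linarith
  rw [z0, z1, z2, z3, z4, y1, y2, y3, y4]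
  ring

lemma deriv_form (c1 c2 c3 c4 c5 c6 : ℝ) (y w : ℝ × ℝ) :
    fderiv ℝ (fun y : ℝ × ℝ => c1 * (y.1 * y.2) + c2 * (y.1 ^ 2 * y.2) + c3 * (y.1 * y.2 ^ 2) +
      c4 * (y.1 ^ 3 * y.2) + c5 * (y.1 ^ 2 * y.2 ^ 2) + c6 * (y.1 * y.2 ^ 3)) y w =
    w.1 * (c1 * y.2 + c2 * (2 * y.1 * y.2) + c3 * y.2 ^ 2 + c4 * (3 * y.1 ^ 2 * y.2) +
      c5 * (2 * y.1 * y.2 ^ 2) + c6 * y.2 ^ 3) +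
    w.2 * (c1 * y.1 + c2 * y.1 ^ 2 + c3 * (2 * y.1 * y.2) + c4 * y.1 ^ 3 +
      c5 * (2 * y.1 ^ 2 * y.2) + c6 * (3 * y.1 * y.2 ^ 2)) := by
  have hx : HasFDerivAt (fun y : ℝ × ℝ => y.1) (ContinuousLinearMap.fst ℝ ℝ ℝ) y := hasFDerivAt_fst
  have hy : HasFDerivAt (fun y : ℝ × ℝ => y.2) (ContinuousLinearMap.snd ℝ ℝ ℝ) y := hasFDerivAt_snd
  have := ((((((hx.mul hy).const_mul c1).add (((hx.pow 2).mul hy).const_mul c2)).add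
    ((hx.mul (hy.pow 2)).const_mul c3)).add (((hx.pow 3).mul hy).const_mul c4)).add
    (((hx.pow 2).mul (hy.pow 2)).const_mul c5)).add ((hx.mul (hy.pow 3)).const_mul c6)
  have h2 := congrArg (fun L : (ℝ × ℝ) →L[ℝ] ℝ => L w) this.fderiv
  refine Eq.trans h2 ?_
  simp
  ring

lemma poly_diff (p : MvPolynomial (Fin 2) ℝ) :
    Differentiable ℝ (fun x : ℝ × ℝ => MvPolynomial.eval ![x.1, x.2] p) := by
  simp only [MvPolynomial.eval_eq', Fin.prod_univ_two, Matrix.cons_val_zero, Matrix.cons_val_one]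
  fun_prop

/-- Subsection 5.3: at an exactly singular boundary vertex `V` whose basin is a single
triangle `K = convexHull {A, B, V}`, the sting function `s = e ∘ β` is orthogonal to the
divergence of every quartic vector field vanishing on the two edges `[V,A]`, `[V,B]`. -/
theorem sting_is_spurious_at_boundary_singular_vertex (A B V : ℝ × ℝ)
    (hindep : AffineIndependent ℝ ![A, B, V])
    (β : (ℝ × ℝ) →ᵃ[ℝ] ℝ) (hβV : β V = 1) (hβA : β A = 0) (hβB : β B = 0)
    (s : ℝ × ℝ → ℝ)
    (hs : ∀ x, s x = (56 * (β x) ^ 3 - 63 * (β x) ^ 2 + 18 * (β x) - 1) / 10)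
    (p₁ p₂ : MvPolynomial (Fin 2) ℝ)
    (hp₁ : p₁.totalDegree ≤ 4) (hp₂ : p₂.totalDegree ≤ 4)
    (v : ℝ × ℝ → ℝ × ℝ)
    (hv : ∀ x, v x = (MvPolynomial.eval ![x.1, x.2] p₁, MvPolynomial.eval ![x.1, x.2] p₂))
    (hVA : ∀ x ∈ segment ℝ V A, v x = 0)
    (hVB : ∀ x ∈ segment ℝ V B, v x = 0) :
    ∫ x in convexHull ℝ {A, B, V}, s x * pdiv v x = 0 := by
  let M : (ℝ × ℝ) →L[ℝ] (ℝ × ℝ) :=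
    (ContinuousLinearMap.fst ℝ ℝ ℝ).smulRight (A - V) +
      (ContinuousLinearMap.snd ℝ ℝ ℝ).smulRight (B - V)
  have hM : ∀ y, M y = y.1 • (A - V) + y.2 • (B - V) := fun y => rfl
  let L : ℝ × ℝ → ℝ × ℝ := fun y => M y + V
  have hL : ∀ y, L y = y.1 • A + y.2 • B + (1 - y.1 - y.2) • V := by
    intro y
    simp only [L, hM]
    module
  have hLd : ∀ y, HasFDerivAt L M y := fun y => M.hasFDerivAt.add_const V
  -- injectivity and surjectivity
  have hMinj : Function.Injective M := by
    rw [injective_iff_map_eq_zero]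
    intro y hy
    rw [affineIndependent_iff] at hindep
    have h := hindep Finset.univ ![y.1, y.2, -y.1 - y.2]
      (by simp [Fin.sum_univ_three])
      (by
        simp only [Fin.sum_univ_three]
        rw [← hy, hM]
        simp
        module)
    have h0 := h 0 (Finset.mem_univ _)
    have h1 := h 1 (Finset.mem_univ _)
    simp at h0 h1
    exact Prod.ext h0 h1
  have hLinj : Function.Injective L := fun x y h => hMinj (add_right_cancel h)
  have hMsurj : Function.Surjective M :=
    (LinearMap.injective_iff_surjective (f := (M : (ℝ × ℝ) →ₗ[ℝ] (ℝ × ℝ)))).1 hMinj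
  -- the image of the reference triangle
  have himg : convexHull ℝ {A, B, V} = L '' refT := by
    apply Set.Subset.antisymm
    · refine convexHull_min ?_ ?_
      · rintro x (rfl | rfl | rfl)
        · exact ⟨(1, 0), by norm_num [refT], by rw [hL]; simp⟩
        · exact ⟨(0, 1), by norm_num [refT], by rw [hL]; simp⟩
        · exact ⟨(0, 0), by norm_num [refT], by rw [hL]; simp⟩
      · have hT : Convex ℝ refT := by
          rintro x ⟨x1, x2, x3⟩ y ⟨y1, y2, y3⟩ a b ha hb hab
          refine ⟨?_, ?_, ?_⟩
          · simp; positivity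
          · simp; positivity
          · simp
            nlinarith [mul_le_mul_of_nonneg_left x3 ha, mul_le_mul_of_nonneg_left y3 hb]
        have h2 := (hT.linear_image (M : (ℝ × ℝ) →ₗ[ℝ] (ℝ × ℝ))).translate V
        convert h2 using 1
        rw [Set.image_image]
        refine Set.image_congr fun y _ => ?_
        exact add_comm _ _
    · rintro _ ⟨y, ⟨h1, h2, h3⟩, rfl⟩
      rw [hL]
      have hA : A ∈ convexHull ℝ {A, B, V} := subset_convexHull _ _ (by simp)
      have hB : B ∈ convexHull ℝ {A, B, V} := subset_convexHull _ _ (by simp)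
      have hV : V ∈ convexHull ℝ {A, B, V} := subset_convexHull _ _ (by simp)
      have := (convex_convexHull ℝ {A, B, V}).sum_mem (t := Finset.univ)
        (w := ![y.1, y.2, 1 - y.1 - y.2]) (z := ![A, B, V])
        (by
          intro i _
          fin_cases i
          · exact h1
          · exact h2
          · simp; linarith)
        (by simp [Fin.sum_univ_three])
        (by
          intro i _
          fin_cases i
          · exact hA
          · exact hB
          · exact hV)
      simpa [Fin.sum_univ_three] using this
  -- the barycentric coordinate
  have hβL : ∀ y, β (L y) = 1 - y.1 - y.2 := by
    intro y
    have hd : ∀ x, β x = β.linear x + β 0 := fun x => congrFun β.decomp x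
    have hA := hd A
    have hB := hd B
    have hV := hd V
    rw [hβA] at hA
    rw [hβB] at hB
    rw [hβV] at hV
    rw [hd, hL, map_add, map_add, map_smul, map_smul, map_smul]
    simp only [smul_eq_mul]
    rw [show β.linear A = -β 0 by linarith, show β.linear B = -β 0 by linarith,
      show β.linear V = 1 - β 0 by linarith]
    ring
  -- vanishing on the edges
  have segA : ∀ t ∈ Set.Icc (0:ℝ) 1, v (t • (A - V) + V) = 0 := by
    intro t ht
    refine hVA _ ⟨1 - t, t, by linarith [ht.2], ht.1, by ring, by module⟩
  have segB : ∀ t ∈ Set.Icc (0:ℝ) 1, v (t • (B - V) + V) = 0 := by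
    intro t ht
    refine hVB _ ⟨1 - t, t, by linarith [ht.2], ht.1, by ring, by module⟩
  simp only [hv] at segA segB
  obtain ⟨c1, c2, c3, c4, c5, c6, hc⟩ := pullback_form p₁ hp₁ (A - V) (B - V) V
    (fun t ht => congrArg Prod.fst (segA t ht)) (fun t ht => congrArg Prod.fst (segB t ht))
  obtain ⟨d1, d2, d3, d4, d5, d6, hd⟩ := pullback_form p₂ hp₂ (A - V) (B - V) V
    (fun t ht => congrArg Prod.snd (segA t ht)) (fun t ht => congrArg Prod.snd (segB t ht))
  obtain ⟨w, hw⟩ := hMsurj (1, 0)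
  obtain ⟨z, hz⟩ := hMsurj (0, 1)
  have chain : ∀ (p : MvPolynomial (Fin 2) ℝ) (y w : ℝ × ℝ),
      fderiv ℝ (fun x : ℝ × ℝ => MvPolynomial.eval ![x.1, x.2] p) (L y) (M w) =
      fderiv ℝ (fun y : ℝ × ℝ => MvPolynomial.eval ![(L y).1, (L y).2] p) y w := by
    intro p y w
    have h := ((poly_diff p (L y)).hasFDerivAt.comp y (hLd y)).fderiv
    exact (congrArg (fun T : (ℝ × ℝ) →L[ℝ] ℝ => T w) h).symm
  have hdiv : ∀ y, pdiv v (L y) =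
      (w.2 * c1 + z.2 * d1) * y.1 + (w.1 * c1 + z.1 * d1) * y.2 +
      (w.2 * c2 + z.2 * d2) * y.1 ^ 2 +
      (2 * (w.1 * c2 + z.1 * d2) + 2 * (w.2 * c3 + z.2 * d3)) * (y.1 * y.2) +
      (w.1 * c3 + z.1 * d3) * y.2 ^ 2 + (w.2 * c4 + z.2 * d4) * y.1 ^ 3 +
      (3 * (w.1 * c4 + z.1 * d4) + 2 * (w.2 * c5 + z.2 * d5)) * (y.1 ^ 2 * y.2) +
      (2 * (w.1 * c5 + z.1 * d5) + 3 * (w.2 * c6 + z.2 * d6)) * (y.1 * y.2 ^ 2) +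
      (w.1 * c6 + z.1 * d6) * y.2 ^ 3 := by
    intro y
    simp only [pdiv, hv]
    rw [← hw, ← hz, chain, chain]
    simp only [L, hM, hc, hd, deriv_form]
    ring
  rw [himg, integral_image_eq_integral_abs_det_fderiv_smul volume refT_closed.measurableSet
    (fun y _ => (hLd y).hasFDerivWithinAt) hLinj.injOn]
  simp only [hs, hβL, hdiv]
  rw [integral_smul, int_key, smul_zero]
end

section
/- Let V ∈ ℝ², let τ₁, τ₂ ∈ ℝ² be linearly independent unit vectors, and let ℓ₁, ℓ₂, ℓ₃, ℓ₄ > 0. Set V₁ = V + ℓ₁τ₁, V₂ = V + ℓ₂τ₂, V₃ = V − ℓ₃τ₁, V₄ = V − ℓ₄τ₂, and for i = 1,2,3,4 (indices mod 4) let K_i = convexHull{V, V_i, V_{i+1}} and let s_i(x) = e(β_i(x)) where β_i is the affine function with β_i(V) = 1, β_i(V_i) = β_i(V_{i+1}) = 0 and e(t) = (56t³ − 63t² + 18t − 1)/10. Suppose v₁, v₂, v₃, v₄ : ℝ² → ℝ² each have polynomial components of total degree at most 4, and for each i (mod 4) the maps v_i and v_{i+1} agree on the segment [V, V_{i+1}].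 Then (1/(ℓ₁ℓ₂)) ∫_{K₁} s₁ div v₁ dx − (1/(ℓ₂ℓ₃)) ∫_{K₂} s₂ div v₂ dx + (1/(ℓ₃ℓ₄)) ∫_{K₃} s₃ div v₃ dx − (1/(ℓ₄ℓ₁)) ∫_{K₄} s₄ div v₄ dx = 0. -/
open MeasureTheory

open MvPolynomial in
lemma sting_hasFDerivAt (p : MvPolynomial (Fin 2) ℝ) (x : ℝ × ℝ) :
    HasFDerivAt (fun y : ℝ × ℝ => eval ![y.1, y.2] p)
      (eval ![x.1, x.2] (pderiv 0 p) • ContinuousLinearMap.fst ℝ ℝ ℝ +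
        eval ![x.1, x.2] (pderiv 1 p) • ContinuousLinearMap.snd ℝ ℝ ℝ) x := by
  induction p using MvPolynomial.induction_on with
  | C a => simpa using hasFDerivAt_const a x
  | add p q hp hq =>
    have := hp.add hq
    simp only [map_add]
    refine this.congr_fderiv ?_
    ext <;> simp
  | mul_X p i hp =>
    fin_cases i
    · have := hp.mul (hasFDerivAt_fst (𝕜 := ℝ) (p := x))
      simp only [map_mul, Derivation.leibniz]
      refine (this.congr_fderiv ?_).congr_of_eventuallyEq (Filter.Eventually.of_forall ?_)
      · ext <;> simp [pderiv_X]
      · intro y; simp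
    · have := hp.mul (hasFDerivAt_snd (𝕜 := ℝ) (p := x))
      simp only [map_mul, Derivation.leibniz]
      refine (this.congr_fderiv ?_).congr_of_eventuallyEq (Filter.Eventually.of_forall ?_)
      · ext <;> simp [pderiv_X]
      · intro y; simp

open MvPolynomial in
lemma sting_totalDegree_pderiv (p : MvPolynomial (Fin 2) ℝ) (i : Fin 2) (h : p.totalDegree ≤ 4) :
    (pderiv i p).totalDegree ≤ 3 := by
  rw [totalDegree, Finset.sup_le_iff]
  intro m hm
  rw [mem_support_iff, coeff_pderiv] at hm
  have h2 := (le_totalDegree (mem_support_iff.mpr (left_ne_zero_of_mul hm))).trans h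
  rw [Finsupp.sum_fintype _ _ (by simp), Fin.sum_univ_two] at h2 ⊢
  fin_cases i <;> simp at h2 <;> omega

open MvPolynomial in
lemma sting_totalDegree_bind (p : MvPolynomial (Fin 2) ℝ) (f : Fin 2 → MvPolynomial (Fin 2) ℝ)
    (hf : ∀ i, (f i).totalDegree ≤ 1) (h : p.totalDegree ≤ 3) :
    (bind₁ f p).totalDegree ≤ 3 := by
  rw [p.as_sum, map_sum]
  refine totalDegree_finsetSum_le fun m hm => ?_
  rw [bind₁_monomial]
  refine (totalDegree_mul _ _).trans ?_
  rw [totalDegree_C, zero_add]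
  refine (totalDegree_finsetProd _ _).trans ?_
  refine le_trans ?_ ((le_totalDegree hm).trans h)
  refine Finset.sum_le_sum fun i _ => (totalDegree_pow _ _).trans ?_
  simpa using Nat.mul_le_mul_left (m i) (hf i)

/-- the reference triangle -/
def refTri : Set (ℝ × ℝ) := {x | 0 ≤ x.1 ∧ 0 ≤ x.2 ∧ x.1 + x.2 ≤ 1}

lemma refTri_closed : IsClosed refTri := by
  refine IsClosed.inter ?_ (IsClosed.inter ?_ ?_)
  · exact isClosed_le continuous_const continuous_fst
  · exact isClosed_le continuous_const continuous_snd
  · exact isClosed_le (continuous_fst.add continuous_snd) continuous_const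

lemma refTri_compact : IsCompact refTri := by
  refine (isCompact_Icc (a := ((0:ℝ),(0:ℝ))) (b := (1,1))).of_isClosed_subset refTri_closed ?_
  rintro ⟨a, b⟩ ⟨h1, h2, h3⟩
  simp only at h1 h2 h3
  exact ⟨⟨h1, h2⟩, ⟨by simp; linarith, by simp; linarith⟩⟩

lemma refTri_integral (f : ℝ × ℝ → ℝ) (hf : Continuous f) :
    ∫ x in refTri, f x = ∫ s in (0:ℝ)..1, ∫ t in (0:ℝ)..(1 - s), f (s, t) := by
  rw [← integral_indicator refTri_closed.measurableSet, Measure.volume_eq_prod, integral_prod]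
  · rw [intervalIntegral.integral_of_le zero_le_one, ← integral_Icc_eq_integral_Ioc,
      ← integral_indicator measurableSet_Icc]
    congr 1
    ext s
    by_cases hs : s ∈ Set.Icc (0:ℝ) 1
    · rw [Set.indicator_of_mem hs, intervalIntegral.integral_of_le (by linarith [hs.2]),
        ← integral_Icc_eq_integral_Ioc, ← integral_indicator measurableSet_Icc]
      congr 1
      ext t
      simp only [Set.indicator, refTri, Set.mem_setOf_eq, Set.mem_Icc]
      congr 1
      simp only [eq_iff_iff]
      constructor
      · rintro ⟨_, h2, h3⟩; exact ⟨h2, by linarith⟩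
      · rintro ⟨h2, h3⟩; exact ⟨hs.1, h2, by linarith⟩
    · rw [Set.indicator_of_notMem hs]
      rw [show (fun t => refTri.indicator f (s, t)) = fun _ => 0 from ?_]
      · simp
      · ext t
        apply Set.indicator_of_notMem
        rintro ⟨h1, h2, h3⟩
        simp only at h1 h2 h3
        exact hs ⟨h1, by linarith⟩
  · rw [integrable_indicator_iff refTri_closed.measurableSet]
    exact hf.continuousOn.integrableOn_compact refTri_compact

/-- the one-variable sting profile -/
noncomputable def stingE (t : ℝ) : ℝ := (56 * t ^ 3 - 63 * t ^ 2 + 18 * t - 1) / 10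

lemma sting_inner (j : ℕ) (r : ℝ) :
    ∫ t in (0:ℝ)..r, stingE (r - t) * t ^ j =
      stingE r * r ^ (j + 1) / (j + 1) - (168 * r ^ 2 - 126 * r + 18) / 10 * r ^ (j + 2) / (j + 2)
        + (168 * r - 63) / 10 * r ^ (j + 3) / (j + 3) - 56 / 10 * r ^ (j + 4) / (j + 4) := by
  have key : ∀ t : ℝ, HasDerivAt (fun t : ℝ =>
      stingE r * (t ^ (j + 1) / (j + 1)) - (168 * r ^ 2 - 126 * r + 18) / 10 * (t ^ (j + 2) / (j + 2))
        + (168 * r - 63) / 10 * (t ^ (j + 3) / (j + 3)) - 56 / 10 * (t ^ (j + 4) / (j + 4)))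
      (stingE (r - t) * t ^ j) t := by
    intro t
    have hp : ∀ k : ℕ, HasDerivAt (fun t : ℝ => t ^ (k + 1) / ((k : ℝ) + 1)) (t ^ k) t := by
      intro k
      have := (hasDerivAt_pow (k + 1) t).div_const ((k : ℝ) + 1)
      refine this.congr_deriv ?_
      have : (k : ℝ) + 1 ≠ 0 := by positivity
      push_cast
      field_simp
    have h0 := hp j
    have h1 := hp (j + 1)
    have h2 := hp (j + 2)
    have h3 := hp (j + 3)
    push_cast at h1 h2 h3
    rw [show (j : ℝ) + 1 + 1 = j + 2 by ring] at h1
    rw [show (j : ℝ) + 2 + 1 = j + 3 by ring] at h2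
    rw [show (j : ℝ) + 3 + 1 = j + 4 by ring] at h3
    refine ((((h0.const_mul (stingE r)).sub (h1.const_mul _)).add (h2.const_mul _)).sub
      (h3.const_mul _)).congr_deriv ?_
    simp only [stingE]
    ring
  rw [intervalIntegral.integral_eq_sub_of_hasDerivAt (fun t _ => key t)]
  · simp
    ring
  · apply Continuous.intervalIntegrable
    unfold stingE
    fun_prop

lemma sting_poly_integral (c₀ c₁ c₂ c₃ c₄ c₅ c₆ c₇ : ℝ) :
    ∫ s in (0:ℝ)..1, (c₀ + c₁ * s + c₂ * s ^ 2 + c₃ * s ^ 3 + c₄ * s ^ 4 + c₅ * s ^ 5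
      + c₆ * s ^ 6 + c₇ * s ^ 7) =
    c₀ + c₁ / 2 + c₂ / 3 + c₃ / 4 + c₄ / 5 + c₅ / 6 + c₆ / 7 + c₇ / 8 := by
  have key : ∀ t : ℝ, HasDerivAt (fun s : ℝ => c₀ * s + c₁ / 2 * s ^ 2 + c₂ / 3 * s ^ 3
      + c₃ / 4 * s ^ 4 + c₄ / 5 * s ^ 5 + c₅ / 6 * s ^ 6 + c₆ / 7 * s ^ 7 + c₇ / 8 * s ^ 8)
      (c₀ + c₁ * t + c₂ * t ^ 2 + c₃ * t ^ 3 + c₄ * t ^ 4 + c₅ * t ^ 5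
      + c₆ * t ^ 6 + c₇ * t ^ 7) t := by
    intro t
    refine (((((((((hasDerivAt_id t).const_mul c₀).add ((hasDerivAt_pow 2 t).const_mul _)).add
      ((hasDerivAt_pow 3 t).const_mul _)).add ((hasDerivAt_pow 4 t).const_mul _)).add
      ((hasDerivAt_pow 5 t).const_mul _)).add ((hasDerivAt_pow 6 t).const_mul _)).add
      ((hasDerivAt_pow 7 t).const_mul _)).add ((hasDerivAt_pow 8 t).const_mul _)).congr_deriv ?_
    push_cast
    ring
  rw [intervalIntegral.integral_eq_sub_of_hasDerivAt (fun t _ => key t)]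
  · ring
  · apply Continuous.intervalIntegrable
    fun_prop

lemma sting_monomial (i j : ℕ) (h : i + j ≤ 3) :
    ∫ x in refTri, stingE (1 - x.1 - x.2) * (x.1 ^ i * x.2 ^ j) =
      if i = 0 ∧ j = 0 then 1 / 200 else 0 := by
  rw [refTri_integral _ (by unfold stingE; fun_prop)]
  have : ∀ s t : ℝ, stingE (1 - s - t) * (s ^ i * t ^ j) = s ^ i * (stingE (1 - s - t) * t ^ j) := by
    intros; ring
  simp only [this, intervalIntegral.integral_const_mul, sting_inner]
  have hi : i ≤ 3 := by omega
  have hj : j ≤ 3 := by omega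
  interval_cases i <;> interval_cases j <;> first | (exfalso; omega) | skip
  · refine Eq.trans (intervalIntegral.integral_congr ?_) (Eq.trans (sting_poly_integral
      (1/10) (-1) (3) (-7/2) (7/5) (0) (0) (0)) (by norm_num))
    intro s _
    simp only [stingE]
    norm_num
    ring
  · refine Eq.trans (intervalIntegral.integral_congr ?_) (Eq.trans (sting_poly_integral
      (1/200) (-1/10) (1/2) (-1) (7/8) (-7/25) (0) (0)) (by norm_num))
    intro s _
    simp only [stingE]
    norm_num
    ring
  · refine Eq.trans (intervalIntegral.integral_congr ?_) (Eq.trans (sting_poly_integral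
      (0) (-1/100) (1/10) (-1/3) (1/2) (-7/20) (7/75) (0)) (by norm_num))
    intro s _
    simp only [stingE]
    norm_num
    ring
  · refine Eq.trans (intervalIntegral.integral_congr ?_) (Eq.trans (sting_poly_integral
      (0) (0) (3/200) (-1/10) (1/4) (-3/10) (7/40) (-1/25)) (by norm_num))
    intro s _
    simp only [stingE]
    norm_num
    ring
  · refine Eq.trans (intervalIntegral.integral_congr ?_) (Eq.trans (sting_poly_integral
      (0) (1/10) (-1) (3) (-7/2) (7/5) (0) (0)) (by norm_num))
    intro s _
    simp only [stingE]
    norm_num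
    ring
  · refine Eq.trans (intervalIntegral.integral_congr ?_) (Eq.trans (sting_poly_integral
      (0) (1/200) (-1/10) (1/2) (-1) (7/8) (-7/25) (0)) (by norm_num))
    intro s _
    simp only [stingE]
    norm_num
    ring
  · refine Eq.trans (intervalIntegral.integral_congr ?_) (Eq.trans (sting_poly_integral
      (0) (0) (-1/100) (1/10) (-1/3) (1/2) (-7/20) (7/75)) (by norm_num))
    intro s _
    simp only [stingE]
    norm_num
    ring
  · refine Eq.trans (intervalIntegral.integral_congr ?_) (Eq.trans (sting_poly_integral
      (0) (0) (1/10) (-1) (3) (-7/2) (7/5) (0)) (by norm_num))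
    intro s _
    simp only [stingE]
    norm_num
    ring
  · refine Eq.trans (intervalIntegral.integral_congr ?_) (Eq.trans (sting_poly_integral
      (0) (0) (1/200) (-1/10) (1/2) (-1) (7/8) (-7/25)) (by norm_num))
    intro s _
    simp only [stingE]
    norm_num
    ring
  · refine Eq.trans (intervalIntegral.integral_congr ?_) (Eq.trans (sting_poly_integral
      (0) (0) (0) (1/10) (-1) (3) (-7/2) (7/5)) (by norm_num))
    intro s _
    simp only [stingE]
    norm_num
    ring

open MvPolynomial in
lemma sting_ref (P : MvPolynomial (Fin 2) ℝ) (h : P.totalDegree ≤ 3) :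
    ∫ x in refTri, stingE (1 - x.1 - x.2) * eval ![x.1, x.2] P = eval ![0, 0] P / 200 := by
  have e1 : ∀ x y : ℝ, eval ![x, y] P = ∑ m ∈ P.support, coeff m P * (x ^ m 0 * y ^ m 1) := by
    intro x y
    rw [eval_eq']
    simp [Fin.prod_univ_two]
  simp only [e1, Finset.mul_sum]
  rw [integral_finsetSum, Finset.sum_div]
  · refine Finset.sum_congr rfl fun m hm => ?_
    have hd : m 0 + m 1 ≤ 3 := by
      have := (le_totalDegree hm).trans h
      rwa [Finsupp.sum_fintype _ _ (by simp), Fin.sum_univ_two] at this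
    have := sting_monomial (m 0) (m 1) hd
    rw [show (fun x : ℝ × ℝ => stingE (1 - x.1 - x.2) * (coeff m P * (x.1 ^ m 0 * x.2 ^ m 1))) =
      fun x => coeff m P * (stingE (1 - x.1 - x.2) * (x.1 ^ m 0 * x.2 ^ m 1)) by ext; ring,
      integral_const_mul, this]
    by_cases h0 : m 0 = 0 <;> by_cases h1 : m 1 = 0 <;> simp [h0, h1]
    ring
  · intro m _
    refine ContinuousOn.integrableOn_compact refTri_compact ?_
    unfold stingE
    fun_prop

lemma refTri_convex : Convex ℝ refTri := by
  rintro ⟨a, b⟩ ⟨h1, h2, h3⟩ ⟨c, d⟩ ⟨h4, h5, h6⟩ u w hu hw huw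
  simp only at h1 h2 h3 h4 h5 h6
  refine ⟨?_, ?_, ?_⟩
  · simp; positivity
  · simp; positivity
  · simp; nlinarith

lemma sting_hull (V a b : ℝ × ℝ) :
    convexHull ℝ {V, V + a, V + b} = (fun x : ℝ × ℝ => V + (x.1 • a + x.2 • b)) '' refTri := by
  apply Set.Subset.antisymm
  · apply convexHull_min
    · rintro x (rfl | rfl | rfl)
      · exact ⟨(0, 0), by simp [refTri], by simp⟩
      · exact ⟨(1, 0), by simp [refTri], by simp⟩
      · exact ⟨(0, 1), by simp [refTri], by simp⟩
    · rintro _ ⟨x, hx, rfl⟩ _ ⟨y, hy, rfl⟩ u w hu hw huw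
      refine ⟨u • x + w • y, refTri_convex hx hy hu hw huw, ?_⟩
      have : w = 1 - u := by linarith
      subst this
      ext <;> simp <;> ring
  · rintro _ ⟨⟨s, t⟩, ⟨h1, h2, h3⟩, rfl⟩
    simp only at h1 h2 h3 ⊢
    have hc := convex_convexHull ℝ ({V, V + a, V + b} : Set (ℝ × ℝ))
    have hm := hc.sum_mem (t := Finset.univ) (w := ![1 - s - t, s, t]) (z := ![V, V + a, V + b])
      (by intro i _; fin_cases i <;> simp <;> linarith) (by simp [Fin.sum_univ_three]; ring)
      (by intro i _; fin_cases i <;> exact subset_convexHull ℝ _ (by simp))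
    convert hm using 1
    simp only [Fin.sum_univ_three]
    ext <;> simp <;> ring

open MvPolynomial in
lemma sting_triangle (V a b : ℝ × ℝ) (hD : a.1 * b.2 - a.2 * b.1 ≠ 0) (β : (ℝ × ℝ) →ᵃ[ℝ] ℝ)
    (h0 : β V = 1) (ha : β (V + a) = 0) (hb : β (V + b) = 0)
    (P : MvPolynomial (Fin 2) ℝ) (h : P.totalDegree ≤ 3) :
    ∫ x in convexHull ℝ {V, V + a, V + b}, stingE (β x) * eval ![x.1, x.2] P =
      |a.1 * b.2 - a.2 * b.1| * (eval ![V.1, V.2] P / 200) := by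
  rw [sting_hull]
  set L : ℝ × ℝ →L[ℝ] ℝ × ℝ := (ContinuousLinearMap.fst ℝ ℝ ℝ).smulRight a +
    (ContinuousLinearMap.snd ℝ ℝ ℝ).smulRight b with hL
  have hdet : L.det = a.1 * b.2 - a.2 * b.1 := by
    have : L = LinearMap.toContinuousLinearMap (Matrix.toLin (Module.Basis.finTwoProd ℝ)
      (Module.Basis.finTwoProd ℝ) !![a.1, b.1; a.2, b.2]) := by
      rw [Matrix.toLin_finTwoProd_toContinuousLinearMap]
      ext <;> simp [hL]
    rw [this]
    simp only [LinearMap.det_toContinuousLinearMap, LinearMap.det_toLin, Matrix.det_fin_two_of]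
    ring
  rw [integral_image_eq_integral_abs_det_fderiv_smul volume refTri_closed.measurableSet
    (f' := fun _ => L)]
  · simp only [hdet, smul_eq_mul, integral_const_mul]
    congr 1
    set f : Fin 2 → MvPolynomial (Fin 2) ℝ := ![C V.1 + (C a.1 * X 0 + C b.1 * X 1),
      C V.2 + (C a.2 * X 0 + C b.2 * X 1)] with hf
    have hev : ∀ x y : ℝ, eval ![x, y] (bind₁ f P) =
        eval ![V.1 + (x * a.1 + y * b.1), V.2 + (x * a.2 + y * b.2)] P := by
      intro x y
      rw [← coe_aeval_eq_eval, ← coe_aeval_eq_eval]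
      simp only [RingHom.coe_coe]
      rw [aeval_bind₁]
      congr 2
      ext i
      fin_cases i <;> simp [hf] <;> ring
    have hlin : ∀ c₀ c₁ c₂ : ℝ, (C c₀ + (C c₁ * X 0 + C c₂ * X 1) :
        MvPolynomial (Fin 2) ℝ).totalDegree ≤ 1 := by
      intro c₀ c₁ c₂
      refine (totalDegree_add _ _).trans (max_le (by simp) ?_)
      refine (totalDegree_add _ _).trans (max_le ?_ ?_)
      · exact (totalDegree_mul _ _).trans (by simp)
      · exact (totalDegree_mul _ _).trans (by simp)
    have := sting_ref (bind₁ f P) (sting_totalDegree_bind P f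
      (by intro i; fin_cases i <;> exact hlin _ _ _) h)
    rw [show eval ![V.1, V.2] P = eval ![0, 0] (bind₁ f P) by rw [hev]; simp, ← this]
    congr 1
    ext x
    have hβ : β (V + (x.1 • a + x.2 • b)) = 1 - x.1 - x.2 := by
      have e : ∀ w, β (V + w) = β.linear w + 1 := by
        intro w
        have := β.map_vadd V w
        simpa [h0, add_comm] using this
      rw [e] at ha hb ⊢
      simp only [map_add, map_smul, smul_eq_mul]
      rw [show β.linear a = -1 by linarith, show β.linear b = -1 by linarith]
      ring
    rw [hβ, hev]
    simp
  · intro x _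
    have := (L.hasFDerivAt (x := x)).const_add V
    refine HasFDerivAt.hasFDerivWithinAt ?_
    exact this
  · rintro ⟨x1, x2⟩ _ ⟨y1, y2⟩ _ hxy
    simp only [Prod.ext_iff, Prod.fst_add, Prod.snd_add, Prod.smul_fst, Prod.smul_snd,
      smul_eq_mul] at hxy ⊢
    obtain ⟨e1, e2⟩ := hxy
    constructor
    · apply mul_left_cancel₀ hD
      linear_combination b.2 * e1 - b.1 * e2
    · apply mul_left_cancel₀ hD
      linear_combination a.1 * e2 - a.2 * e1

open MvPolynomial in
lemma sting_dir (V w : ℝ × ℝ) (p q : MvPolynomial (Fin 2) ℝ)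
    (h : ∀ x ∈ segment ℝ V (V + w), eval ![x.1, x.2] p = eval ![x.1, x.2] q) :
    eval ![V.1, V.2] (pderiv 0 p) * w.1 + eval ![V.1, V.2] (pderiv 1 p) * w.2 =
    eval ![V.1, V.2] (pderiv 0 q) * w.1 + eval ![V.1, V.2] (pderiv 1 q) * w.2 := by
  have key : ∀ r : MvPolynomial (Fin 2) ℝ, HasDerivWithinAt
      (fun t : ℝ => eval ![(V + t • w).1, (V + t • w).2] r)
      (eval ![V.1, V.2] (pderiv 0 r) * w.1 + eval ![V.1, V.2] (pderiv 1 r) * w.2)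
      (Set.Icc 0 1) 0 := by
    intro r
    have h1 : HasDerivAt (fun t : ℝ => V + t • w) w 0 := by
      simpa using ((hasDerivAt_id (0:ℝ)).smul_const w).const_add V
    have h2 := sting_hasFDerivAt r (V + (0:ℝ) • w)
    have h3 := h2.comp_hasDerivAt (0:ℝ) h1
    refine HasDerivAt.hasDerivWithinAt ?_
    simpa [Function.comp_def] using h3
  have hu : UniqueDiffWithinAt ℝ (Set.Icc (0:ℝ) 1) 0 :=
    uniqueDiffOn_Icc zero_lt_one 0 (by simp)
  have hpq : ∀ t ∈ Set.Icc (0:ℝ) 1, eval ![(V + t • w).1, (V + t • w).2] q =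
      eval ![(V + t • w).1, (V + t • w).2] p := by
    intro t ht
    refine (h _ ?_).symm
    rw [segment_eq_image']
    exact ⟨t, ht, by simp⟩
  exact hu.eq_deriv _ (key p) ((key q).congr (fun t ht => (hpq t ht).symm)
    (hpq 0 (by simp)).symm)

open MvPolynomial in
lemma sting_pdiv (v : ℝ × ℝ → ℝ × ℝ) (p q : MvPolynomial (Fin 2) ℝ)
    (hv : ∀ x, v x = (eval ![x.1, x.2] p, eval ![x.1, x.2] q)) (x : ℝ × ℝ) :
    pdiv v x = eval ![x.1, x.2] (pderiv 0 p + pderiv 1 q) := by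
  unfold pdiv
  simp only [hv]
  rw [(sting_hasFDerivAt p x).fderiv, (sting_hasFDerivAt q x).fderiv]
  simp

open MvPolynomial in
lemma sting_term (V a b : ℝ × ℝ) (hD : a.1 * b.2 - a.2 * b.1 ≠ 0) (β : (ℝ × ℝ) →ᵃ[ℝ] ℝ)
    (h0 : β V = 1 ∧ β (V + a) = 0 ∧ β (V + b) = 0) (s : ℝ × ℝ → ℝ)
    (hs : ∀ x, s x = (56 * (β x) ^ 3 - 63 * (β x) ^ 2 + 18 * (β x) - 1) / 10)
    (p q : MvPolynomial (Fin 2) ℝ) (hp : p.totalDegree ≤ 4) (hq : q.totalDegree ≤ 4)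
    (v : ℝ × ℝ → ℝ × ℝ) (hv : ∀ x, v x = (eval ![x.1, x.2] p, eval ![x.1, x.2] q)) :
    ∫ x in convexHull ℝ {V, V + a, V + b}, s x * pdiv v x =
      |a.1 * b.2 - a.2 * b.1| * ((eval ![V.1, V.2] (pderiv 0 p) +
        eval ![V.1, V.2] (pderiv 1 q)) / 200) := by
  rw [← map_add, ← sting_triangle V a b hD β h0.1 h0.2.1 h0.2.2 (pderiv 0 p + pderiv 1 q)
    ((totalDegree_add _ _).trans (max_le (sting_totalDegree_pderiv p 0 hp)
      (sting_totalDegree_pderiv q 1 hq)))]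
  simp only [hs, sting_pdiv v p q hv, stingE]

/-- Equation (5.2) of subsection 5.3: at an interior exactly singular vertex `V`,
surrounded by the four triangles `Kᵢ = convexHull {V, Vᵢ, Vᵢ₊₁}`, the alternating
combination of sting functions is orthogonal to the divergence of every continuous
piecewise-quartic vector field. -/
theorem alternating_sting_sum_is_spurious (V τ₁ τ₂ : ℝ × ℝ)
    (hτ₁ : τ₁.1 ^ 2 + τ₁.2 ^ 2 = 1) (hτ₂ : τ₂.1 ^ 2 + τ₂.2 ^ 2 = 1)
    (hindep : LinearIndependent ℝ ![τ₁, τ₂])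
    (ℓ₁ ℓ₂ ℓ₃ ℓ₄ : ℝ) (hℓ₁ : 0 < ℓ₁) (hℓ₂ : 0 < ℓ₂) (hℓ₃ : 0 < ℓ₃) (hℓ₄ : 0 < ℓ₄)
    (V₁ V₂ V₃ V₄ : ℝ × ℝ)
    (hV₁ : V₁ = V + ℓ₁ • τ₁) (hV₂ : V₂ = V + ℓ₂ • τ₂)
    (hV₃ : V₃ = V - ℓ₃ • τ₁) (hV₄ : V₄ = V - ℓ₄ • τ₂)
    (β₁ β₂ β₃ β₄ : (ℝ × ℝ) →ᵃ[ℝ] ℝ)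
    (hβ₁ : β₁ V = 1 ∧ β₁ V₁ = 0 ∧ β₁ V₂ = 0)
    (hβ₂ : β₂ V = 1 ∧ β₂ V₂ = 0 ∧ β₂ V₃ = 0)
    (hβ₃ : β₃ V = 1 ∧ β₃ V₃ = 0 ∧ β₃ V₄ = 0)
    (hβ₄ : β₄ V = 1 ∧ β₄ V₄ = 0 ∧ β₄ V₁ = 0)
    (s₁ s₂ s₃ s₄ : ℝ × ℝ → ℝ)
    (hs₁ : ∀ x, s₁ x = (56 * (β₁ x) ^ 3 - 63 * (β₁ x) ^ 2 + 18 * (β₁ x) - 1) / 10)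
    (hs₂ : ∀ x, s₂ x = (56 * (β₂ x) ^ 3 - 63 * (β₂ x) ^ 2 + 18 * (β₂ x) - 1) / 10)
    (hs₃ : ∀ x, s₃ x = (56 * (β₃ x) ^ 3 - 63 * (β₃ x) ^ 2 + 18 * (β₃ x) - 1) / 10)
    (hs₄ : ∀ x, s₄ x = (56 * (β₄ x) ^ 3 - 63 * (β₄ x) ^ 2 + 18 * (β₄ x) - 1) / 10)
    (p₁ q₁ p₂ q₂ p₃ q₃ p₄ q₄ : MvPolynomial (Fin 2) ℝ)
    (hp₁ : p₁.totalDegree ≤ 4) (hq₁ : q₁.totalDegree ≤ 4)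
    (hp₂ : p₂.totalDegree ≤ 4) (hq₂ : q₂.totalDegree ≤ 4)
    (hp₃ : p₃.totalDegree ≤ 4) (hq₃ : q₃.totalDegree ≤ 4)
    (hp₄ : p₄.totalDegree ≤ 4) (hq₄ : q₄.totalDegree ≤ 4)
    (v₁ v₂ v₃ v₄ : ℝ × ℝ → ℝ × ℝ)
    (hv₁ : ∀ x, v₁ x = (MvPolynomial.eval ![x.1, x.2] p₁, MvPolynomial.eval ![x.1, x.2] q₁))
    (hv₂ : ∀ x, v₂ x = (MvPolynomial.eval ![x.1, x.2] p₂, MvPolynomial.eval ![x.1, x.2] q₂))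
    (hv₃ : ∀ x, v₃ x = (MvPolynomial.eval ![x.1, x.2] p₃, MvPolynomial.eval ![x.1, x.2] q₃))
    (hv₄ : ∀ x, v₄ x = (MvPolynomial.eval ![x.1, x.2] p₄, MvPolynomial.eval ![x.1, x.2] q₄))
    (hagree₁ : ∀ x ∈ segment ℝ V V₂, v₁ x = v₂ x)
    (hagree₂ : ∀ x ∈ segment ℝ V V₃, v₂ x = v₃ x)
    (hagree₃ : ∀ x ∈ segment ℝ V V₄, v₃ x = v₄ x)
    (hagree₄ : ∀ x ∈ segment ℝ V V₁, v₄ x = v₁ x) :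
    (1 / (ℓ₁ * ℓ₂)) * (∫ x in convexHull ℝ {V, V₁, V₂}, s₁ x * pdiv v₁ x) -
      (1 / (ℓ₂ * ℓ₃)) * (∫ x in convexHull ℝ {V, V₂, V₃}, s₂ x * pdiv v₂ x) +
      (1 / (ℓ₃ * ℓ₄)) * (∫ x in convexHull ℝ {V, V₃, V₄}, s₃ x * pdiv v₃ x) -
      (1 / (ℓ₄ * ℓ₁)) * (∫ x in convexHull ℝ {V, V₄, V₁}, s₄ x * pdiv v₄ x) = 0 := by
  subst hV₁ hV₂ hV₃ hV₄
  set D := τ₁.1 * τ₂.2 - τ₁.2 * τ₂.1 with hDdef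
  have hD : D ≠ 0 := by
    intro h
    rw [LinearIndependent.pair_iff] at hindep
    have h1 := hindep τ₂.2 (-τ₁.2) (by
      ext
      · simp; linarith
      · simp; ring)
    have h2 := hindep τ₂.1 (-τ₁.1) (by
      ext
      · simp; ring
      · simp; linarith)
    rw [h1.1, h2.1] at hτ₂
    norm_num at hτ₂
  rw [sub_eq_add_neg V, sub_eq_add_neg V] at *
  have d1 : (ℓ₁ • τ₁).1 * (ℓ₂ • τ₂).2 - (ℓ₁ • τ₁).2 * (ℓ₂ • τ₂).1 = ℓ₁ * ℓ₂ * D := by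
    simp [hDdef]; ring
  have d2 : (ℓ₂ • τ₂).1 * (-(ℓ₃ • τ₁)).2 - (ℓ₂ • τ₂).2 * (-(ℓ₃ • τ₁)).1 = ℓ₂ * ℓ₃ * D := by
    simp [hDdef]; ring
  have d3 : (-(ℓ₃ • τ₁)).1 * (-(ℓ₄ • τ₂)).2 - (-(ℓ₃ • τ₁)).2 * (-(ℓ₄ • τ₂)).1 = ℓ₃ * ℓ₄ * D := by
    simp [hDdef]; ring
  have d4 : (-(ℓ₄ • τ₂)).1 * (ℓ₁ • τ₁).2 - (-(ℓ₄ • τ₂)).2 * (ℓ₁ • τ₁).1 = ℓ₄ * ℓ₁ * D := by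
    simp [hDdef]; ring
  rw [sting_term V _ _ (by rw [d1]; positivity) β₁ hβ₁ s₁ hs₁ p₁ q₁ hp₁ hq₁ v₁ hv₁,
    sting_term V _ _ (by rw [d2]; positivity) β₂ hβ₂ s₂ hs₂ p₂ q₂ hp₂ hq₂ v₂ hv₂,
    sting_term V _ _ (by rw [d3]; positivity) β₃ hβ₃ s₃ hs₃ p₃ q₃ hp₃ hq₃ v₃ hv₃,
    sting_term V _ _ (by rw [d4]; positivity) β₄ hβ₄ s₄ hs₄ p₄ q₄ hp₄ hq₄ v₄ hv₄,
    d1, d2, d3, d4]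
  have red : ∀ l m Z : ℝ, 0 < l → 0 < m → 1 / (l * m) * (|l * m * D| * (Z / 200)) =
      |D| / 200 * Z := by
    intro l m Z hl hm
    rw [abs_mul, abs_of_pos (mul_pos hl hm)]
    field_simp
  rw [red _ _ _ hℓ₁ hℓ₂, red _ _ _ hℓ₂ hℓ₃, red _ _ _ hℓ₃ hℓ₄, red _ _ _ hℓ₄ hℓ₁]
  simp only [hv₁, hv₂, hv₃, hv₄, Prod.mk.injEq] at hagree₁ hagree₂ hagree₃ hagree₄
  have a1 := sting_dir V _ p₁ p₂ fun x hx => (hagree₁ x hx).1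
  have b1 := sting_dir V _ q₁ q₂ fun x hx => (hagree₁ x hx).2
  have a2 := sting_dir V _ p₂ p₃ fun x hx => (hagree₂ x hx).1
  have b2 := sting_dir V _ q₂ q₃ fun x hx => (hagree₂ x hx).2
  have a3 := sting_dir V _ p₃ p₄ fun x hx => (hagree₃ x hx).1
  have b3 := sting_dir V _ q₃ q₄ fun x hx => (hagree₃ x hx).2
  have a4 := sting_dir V _ p₄ p₁ fun x hx => (hagree₄ x hx).1
  have b4 := sting_dir V _ q₄ q₁ fun x hx => (hagree₄ x hx).2
  simp only [Prod.fst_neg, Prod.snd_neg, Prod.smul_fst, Prod.smul_snd, smul_eq_mul] at a1 b1 a2 b2 a3 b3 a4 b4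
  have canc : ∀ l x y u w x' y' : ℝ, 0 < l → x * (l * u) + y * (l * w) = x' * (l * u) + y' * (l * w)
      → x * u + y * w = x' * u + y' * w := by
    intro l x y u w x' y' hl h
    apply mul_left_cancel₀ hl.ne'
    linear_combination h
  have canc' : ∀ l x y u w x' y' : ℝ, 0 < l →
      x * -(l * u) + y * -(l * w) = x' * -(l * u) + y' * -(l * w)
      → x * u + y * w = x' * u + y' * w := by
    intro l x y u w x' y' hl h
    apply mul_left_cancel₀ hl.ne'
    linear_combination -h
  replace a1 := canc _ _ _ _ _ _ _ hℓ₂ a1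
  replace b1 := canc _ _ _ _ _ _ _ hℓ₂ b1
  replace a2 := canc' _ _ _ _ _ _ _ hℓ₃ a2
  replace b2 := canc' _ _ _ _ _ _ _ hℓ₃ b2
  replace a3 := canc' _ _ _ _ _ _ _ hℓ₄ a3
  replace b3 := canc' _ _ _ _ _ _ _ hℓ₄ b3
  replace a4 := canc _ _ _ _ _ _ _ hℓ₁ a4
  replace b4 := canc _ _ _ _ _ _ _ hℓ₁ b4
  apply mul_left_cancel₀ hD
  rw [mul_zero, hDdef]
  linear_combination (|D| / 200) * (-τ₁.2 * (a1 + a3) - τ₂.2 * (a2 + a4)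
    + τ₁.1 * (b1 + b3) + τ₂.1 * (b2 + b4))
end
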